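/- Let n ≥ 1 and let ρ, H, Γ, Π : ℝ → Matrix (Fin n) (Fin n) ℂ be differentiable curves satisfying, for all t: ρ'(t) = [H(t), ρ(t)]_*, H'(t) = Π(t), Γ'(t) = [H(t), Γ(t)]_*, and Π'(t) = [Γ(t), ρ(t)]_*. Then the function t ↦ ½·Re (trace (Γ(t)·[H(t), ρ(t)]_*)) + ¼·Re (trace (Π(t)·Π(t))) is constant on ℝ. (The Pontryagin Hamiltonian h̃(ρ,H,Γ,Π) = Γ([H,ρ]) + ½‖Π‖² is an integral of motion of the Hamiltonian system for quantum splines.) -/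

import Mathlib

/-!
Along the flow, the derivative of `Tr(Γ [H,ρ]_*) + ½ Tr(Π²)` is
`Tr([H,Γ]_* [H,ρ]_*) + Tr(Γ [Π,ρ]_*) + Tr(Γ [H,[H,ρ]_*]_*) + Tr(Π [Γ,ρ]_*)`.
By ad-invariance of the trace form the first and third terms cancel, and so do the second and
fourth (`trace_quantumBracket_mul`). Hence the complex-valued function is constant, and so is
half of its real part.
-/

/-- The Lie bracket `[A,B]_* = -i (AB - BA)` on Hermitian matrices induced by the
identification of `u*(n)` with Hermitian matrices. -/
noncomputable def quantumBracket {n : ℕ} (A B : Matrix (Fin n) (Fin n) ℂ) :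
    Matrix (Fin n) (Fin n) ℂ :=
  (-Complex.I) • (A * B - B * A)

/-- Leibniz rule for curves of matrices differentiated entrywise. -/
lemma hasDerivAt_entry_mul {n : ℕ} {A B : ℝ → Matrix (Fin n) (Fin n) ℂ}
    {A' B' : Matrix (Fin n) (Fin n) ℂ} {t : ℝ}
    (hA : ∀ i j, HasDerivAt (fun s => A s i j) (A' i j) t)
    (hB : ∀ i j, HasDerivAt (fun s => B s i j) (B' i j) t) (i j : Fin n) :
    HasDerivAt (fun s => (A s * B s) i j) ((A' * B t + A t * B') i j) t := by
  simp only [Matrix.mul_apply, Matrix.add_apply, ← Finset.sum_add_distrib]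
  exact HasDerivAt.fun_sum fun k _ => (hA i k).mul (hB k j)

lemma hasDerivAt_entry_quantumBracket {n : ℕ} {A B : ℝ → Matrix (Fin n) (Fin n) ℂ}
    {A' B' : Matrix (Fin n) (Fin n) ℂ} {t : ℝ}
    (hA : ∀ i j, HasDerivAt (fun s => A s i j) (A' i j) t)
    (hB : ∀ i j, HasDerivAt (fun s => B s i j) (B' i j) t) (i j : Fin n) :
    HasDerivAt (fun s => quantumBracket (A s) (B s) i j)
      ((quantumBracket A' (B t) + quantumBracket (A t) B') i j) t := by
  have h := ((hasDerivAt_entry_mul hA hB i j).sub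
    (hasDerivAt_entry_mul hB hA i j)).const_mul (-Complex.I)
  refine h.congr_deriv ?_
  simp only [quantumBracket, Matrix.add_apply, Matrix.smul_apply, Matrix.sub_apply, smul_eq_mul]
  ring

lemma hasDerivAt_trace_of_entry {n : ℕ} {A : ℝ → Matrix (Fin n) (Fin n) ℂ}
    {A' : Matrix (Fin n) (Fin n) ℂ} {t : ℝ}
    (hA : ∀ i j, HasDerivAt (fun s => A s i j) (A' i j) t) :
    HasDerivAt (fun s => (A s).trace) A'.trace t :=
  HasDerivAt.fun_sum fun i _ => hA i i

/-- Ad-invariance of the (complex) trace form. -/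
lemma trace_quantumBracket_mul {n : ℕ} (A B C : Matrix (Fin n) (Fin n) ℂ) :
    (quantumBracket A B * C).trace = (A * quantumBracket B C).trace := by
  simp only [quantumBracket, Matrix.smul_mul, Matrix.mul_smul, Matrix.trace_smul, sub_mul, mul_sub,
    Matrix.trace_sub, ← mul_assoc]
  rw [Matrix.trace_mul_cycle B A C, Matrix.trace_mul_cycle C B A]

lemma quantumBracket_swap {n : ℕ} (A B : Matrix (Fin n) (Fin n) ℂ) :
    quantumBracket A B = -quantumBracket B A := by
  simp only [quantumBracket, ← smul_neg, neg_sub]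

theorem stmt_18 (n : ℕ) (hn : 1 ≤ n)
    (ρ ρ' H H' Γ Γ' Pm Pm' : ℝ → Matrix (Fin n) (Fin n) ℂ)
    (hρ : ∀ t i j, HasDerivAt (fun s => ρ s i j) (ρ' t i j) t)
    (hH : ∀ t i j, HasDerivAt (fun s => H s i j) (H' t i j) t)
    (hΓ : ∀ t i j, HasDerivAt (fun s => Γ s i j) (Γ' t i j) t)
    (hPm : ∀ t i j, HasDerivAt (fun s => Pm s i j) (Pm' t i j) t)
    (hρeq : ∀ t, ρ' t = quantumBracket (H t) (ρ t))
    (hHeq : ∀ t, H' t = Pm t)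
    (hΓeq : ∀ t, Γ' t = quantumBracket (H t) (Γ t))
    (hPmeq : ∀ t, Pm' t = quantumBracket (Γ t) (ρ t)) :
    ∀ t : ℝ,
      (1/2) * (Γ t * quantumBracket (H t) (ρ t)).trace.re
        + (1/4) * (Pm t * Pm t).trace.re
      = (1/2) * (Γ 0 * quantumBracket (H 0) (ρ 0)).trace.re
        + (1/4) * (Pm 0 * Pm 0).trace.re := by
  have hder : ∀ t, HasDerivAt (fun s => (1 / 2 : ℂ) * (Γ s * quantumBracket (H s) (ρ s)).trace
      + (1 / 4 : ℂ) * (Pm s * Pm s).trace) 0 t := by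
    intro t
    have h1 := hasDerivAt_trace_of_entry
      (hasDerivAt_entry_mul (hΓ t) (hasDerivAt_entry_quantumBracket (hH t) (hρ t)))
    have h2 := hasDerivAt_trace_of_entry (hasDerivAt_entry_mul (hPm t) (hPm t))
    refine ((h1.const_mul (1 / 2 : ℂ)).add (h2.const_mul (1 / 4 : ℂ))).congr_deriv ?_
    rw [hρeq, hHeq, hΓeq, hPmeq]
    -- The costate and state equations cancel against each other.
    have e1 : (quantumBracket (H t) (Γ t) * quantumBracket (H t) (ρ t)).trace
        = -(Γ t * quantumBracket (H t) (quantumBracket (H t) (ρ t))).trace := by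
      rw [quantumBracket_swap (H t) (Γ t), Matrix.neg_mul, Matrix.trace_neg,
        trace_quantumBracket_mul]
    -- The variation of `H` cancels against that of the momentum `Π`.
    have e2 : (Γ t * quantumBracket (Pm t) (ρ t)).trace
        = -(quantumBracket (Γ t) (ρ t) * Pm t).trace := by
      rw [trace_quantumBracket_mul, quantumBracket_swap (Pm t), Matrix.mul_neg, Matrix.trace_neg]
    have e3 := Matrix.trace_mul_comm (Pm t) (quantumBracket (Γ t) (ρ t))
    simp only [mul_add, Matrix.trace_add, e1, e2, e3]
    ring
  intro t
  have hconst := is_const_of_deriv_eq_zero (fun s => (hder s).differentiableAt)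
    (fun s => (hder s).deriv) t 0
  have hre := congrArg Complex.re hconst
  have c2 : (1 / 2 : ℂ) = ((1 / 2 : ℝ) : ℂ) := by norm_num
  have c4 : (1 / 4 : ℂ) = ((1 / 4 : ℝ) : ℂ) := by norm_num
  simpa only [c2, c4, Complex.add_re, Complex.re_ofReal_mul] using hre
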